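/- arXiv:1208.6375 — 4 statements merged into one kernel-verified Lean document; each statement's English description precedes it below -/
import Mathlib

section
/- Assume N ≥ 3 and A_{i,j} = 1 − δ_{i,j} (the complete graph). Let I ⊆ E with cardinality k, 2 ≤ k ≤ N, and let v be the center of the face Δ_I, i.e. v_i = 1/k for i ∈ I and v_i = 0 for i ∉ I. Then v is an equilibrium; if k = 2 it is linearly stable for every α > 1; and if k ≥ 3 it is linearly stable when α < (k−1)/(k−2) and linearly unstable when α > (k−1)/(k−2). -/
/-!
Write `w = v ^ α` coordinatewise. At the center of the face of `I` one has `w = c` on `I` and `w = 0`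
off `I`, with `c = k ^ (-α)`; hence `(A w)_i = (k - 1) c` on `I` and `H = k (k - 1) c ^ 2`, which
gives `π(v) = v`. Since `α > 1`, the power `t ↦ t ^ α` is differentiable everywhere, with derivative
zero at `0`, so the quotient rule gives the Jacobian (`DFmat_center`):
`∂_j F_i = 1_{i, j ∈ I} (δ_{ij} α (k - 2) / (k - 1) + α / (k - 1) - 2 α / k) - δ_{ij}`.

On a vector `x` with zero sum this acts as `-1` on the coordinates outside `I`. If these vanish then
the coordinates in `I` have zero sum, the rank-one part disappears, and `DF(v)` acts as the
scalar `α (k - 2) / (k - 1) - 1`. So every eigenvalue on the tangent space is `-1` or this scalar, and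
the scalar is attained at `e_a - e_b` with `a ≠ b` in `I`. Its sign is that of
`α - (k - 1) / (k - 2)` when `k ≥ 3`, and it equals `-1` when `k = 2`.
-/

open Filter Set Matrix

noncomputable def Hfun {N : ℕ} (A : Matrix (Fin N) (Fin N) ℝ) (α : ℝ)
    (v : Fin N → ℝ) : ℝ :=
  ∑ i, ∑ j, A i j * v i ^ α * v j ^ α

noncomputable def piFun {N : ℕ} (A : Matrix (Fin N) (Fin N) ℝ) (α : ℝ)
    (v : Fin N → ℝ) : Fin N → ℝ :=
  fun i => v i ^ α * (∑ j, A i j * v j ^ α) / Hfun A α v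

noncomputable def Ffield {N : ℕ} (A : Matrix (Fin N) (Fin N) ℝ) (α : ℝ)
    (v : Fin N → ℝ) : Fin N → ℝ :=
  fun i => piFun A α v i - v i

def simplexD {N : ℕ} (A : Matrix (Fin N) (Fin N) ℝ) : Set (Fin N → ℝ) :=
  {v | (∀ i, 0 ≤ v i) ∧ (∑ i, v i = 1) ∧ ∀ i, A i i = 0 → v i ≤ 3 / 4}

/-- The Jacobian matrix of `F` at `v` (matrix of partial derivatives `∂_j F_i (v)`). -/
noncomputable def DFmat {N : ℕ} (A : Matrix (Fin N) (Fin N) ℝ) (α : ℝ)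
    (v : Fin N → ℝ) : Matrix (Fin N) (Fin N) ℝ :=
  fun i j => lineDeriv ℝ (fun u => Ffield A α u i) v (Pi.single j 1)

/-- `v` is linearly stable: every eigenvalue of `DF(v)`, viewed (after complexification)
as a linear map of `T_0Δ = {x : ∑ x_i = 0}`, has negative real part. -/
def IsLinStable {N : ℕ} (A : Matrix (Fin N) (Fin N) ℝ) (α : ℝ)
    (v : Fin N → ℝ) : Prop :=
  ∀ (lam : ℂ) (x : Fin N → ℂ), x ≠ 0 → (∑ i, x i) = 0 →
    ((DFmat A α v).map (fun r => (r : ℂ))) *ᵥ x = lam • x → lam.re < 0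

/-- `v` is linearly unstable: some eigenvalue of `DF(v)`, viewed (after complexification)
as a linear map of `T_0Δ = {x : ∑ x_i = 0}`, has positive real part. -/
def IsLinUnstable {N : ℕ} (A : Matrix (Fin N) (Fin N) ℝ) (α : ℝ)
    (v : Fin N → ℝ) : Prop :=
  ∃ (lam : ℂ) (x : Fin N → ℂ), x ≠ 0 ∧ (∑ i, x i) = 0 ∧
    ((DFmat A α v).map (fun r => (r : ℂ))) *ᵥ x = lam • x ∧ 0 < lam.re

/-! ### The Jacobian at a general point -/

/-- The quotient rule for `F_i` in the direction `e_j`; the vector `d` is the derivative of `u ^ α` in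
that direction. -/
lemma DFmat_eq {N : ℕ} {α : ℝ} (hα : 1 < α) (A : Matrix (Fin N) (Fin N) ℝ) (v : Fin N → ℝ)
    (hH : Hfun A α v ≠ 0) (i j : Fin N) (d : Fin N → ℝ)
    (hd : ∀ l, d l = if l = j then α * v l ^ (α - 1) else 0) :
    DFmat A α v i j =
      ((d i * (∑ l, A i l * v l ^ α) + v i ^ α * ∑ l, A i l * d l) * Hfun A α v
        - v i ^ α * (∑ l, A i l * v l ^ α) *
          ∑ m, ∑ l, (A m l * d m * v l ^ α + A m l * v m ^ α * d l)) / Hfun A α v ^ 2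
      - if i = j then 1 else 0 := by
  have hlin : ∀ l, HasDerivAt (fun t : ℝ => (v + t • (Pi.single j 1 : Fin N → ℝ)) l)
      (if l = j then 1 else 0) 0 := by
    intro l
    have h := ((hasDerivAt_id (0 : ℝ)).mul_const ((Pi.single j 1 : Fin N → ℝ) l)).const_add (v l)
    simpa [Pi.single_apply] using h
  have hw : ∀ l, HasDerivAt (fun t : ℝ => (v + t • (Pi.single j 1 : Fin N → ℝ)) l ^ α)
      (d l) 0 := by
    intro l
    have h := (hlin l).rpow_const (p := α) (Or.inr hα.le)
    convert h using 1
    rw [hd]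
    split_ifs <;> simp
  have hAw : HasDerivAt
      (fun t : ℝ => ∑ l, A i l * (v + t • (Pi.single j 1 : Fin N → ℝ)) l ^ α)
      (∑ l, A i l * d l) 0 :=
    HasDerivAt.fun_sum fun l _ => (hw l).const_mul (A i l)
  have hHd : HasDerivAt (fun t : ℝ => Hfun A α (v + t • (Pi.single j 1 : Fin N → ℝ)))
      (∑ m, ∑ l, (A m l * d m * v l ^ α + A m l * v m ^ α * d l)) 0 := by
    unfold Hfun
    refine HasDerivAt.fun_sum fun m _ => HasDerivAt.fun_sum fun l _ => ?_
    simpa using ((hw m).const_mul (A m l)).fun_mul (hw l)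
  have hF := (((hw i).fun_mul hAw).fun_div hHd (by simpa using hH)).fun_sub (hlin i)
  have hL : HasLineDerivAt ℝ (fun u => Ffield A α u i) _ v (Pi.single j 1) := hF
  simpa [DFmat] using hL.lineDeriv

/-! ### Values and Jacobian at the center of a face -/

/-- The center of the face spanned by `I`, for `k` the cardinality of `I`. -/
noncomputable abbrev faceCenter {N : ℕ} (I : Finset (Fin N)) (k : ℕ) : Fin N → ℝ :=
  fun i => if i ∈ I then (k : ℝ)⁻¹ else 0

section Center

variable {N : ℕ} {α : ℝ} {A : Matrix (Fin N) (Fin N) ℝ} {I : Finset (Fin N)} {k : ℕ}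

lemma sum_A_mul (hA : ∀ i j, A i j = if i = j then 0 else 1) (w : Fin N → ℝ) (i : Fin N) :
    ∑ l, A i l * w l = ∑ l, w l - w i := by
  have h : ∀ l, A i l * w l = w l - if i = l then w l else 0 := by
    intro l
    rw [hA]
    split_ifs <;> simp
  simp [h, Finset.sum_sub_distrib]

lemma center_rpow (hα : 1 < α) (i : Fin N) :
    faceCenter I k i ^ α = if i ∈ I then ((k : ℝ)⁻¹) ^ α else 0 := by
  unfold faceCenter
  split_ifs
  · rfl
  · exact Real.zero_rpow (by linarith)

lemma center_Aw (hα : 1 < α) (hA : ∀ i j, A i j = if i = j then 0 else 1)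
    (hcard : I.card = k) (i : Fin N) :
    ∑ l, A i l * faceCenter I k l ^ α =
      k * ((k : ℝ)⁻¹) ^ α - if i ∈ I then ((k : ℝ)⁻¹) ^ α else 0 := by
  rw [sum_A_mul hA (fun l => faceCenter I k l ^ α)]
  simp only [center_rpow hα]
  simp [Finset.sum_ite_mem, hcard]

lemma center_H (hα : 1 < α) (hA : ∀ i j, A i j = if i = j then 0 else 1)
    (hcard : I.card = k) :
    Hfun A α (faceCenter I k) = k * (k - 1) * (((k : ℝ)⁻¹) ^ α) ^ 2 := by
  have h : ∀ i, ∑ j, A i j * faceCenter I k i ^ α * faceCenter I k j ^ α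
      = if i ∈ I then ((k : ℝ) - 1) * (((k : ℝ)⁻¹) ^ α) ^ 2 else 0 := by
    intro i
    have h2 : ∑ j, A i j * faceCenter I k i ^ α * faceCenter I k j ^ α
        = faceCenter I k i ^ α * ∑ j, A i j * faceCenter I k j ^ α := by
      rw [Finset.mul_sum]
      exact Finset.sum_congr rfl fun j _ => by ring
    rw [h2, center_Aw hα hA hcard, center_rpow hα]
    split_ifs
    · ring
    · simp
  unfold Hfun
  simp only [h]
  simp [Finset.sum_ite_mem, hcard]
  ring

lemma center_equilibrium (hα : 1 < α) (hA : ∀ i j, A i j = if i = j then 0 else 1)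
    (hcard : I.card = k) (hk2 : 2 ≤ k) : Ffield A α (faceCenter I k) = 0 := by
  have hk : (2 : ℝ) ≤ k := by exact_mod_cast hk2
  have hc : 0 < ((k : ℝ)⁻¹) ^ α := Real.rpow_pos_of_pos (by positivity) _
  have hk1 : (k : ℝ) - 1 ≠ 0 := by linarith
  funext i
  simp only [Ffield, piFun, Pi.zero_apply]
  rw [center_Aw hα hA hcard, center_H hα hA hcard, center_rpow hα]
  unfold faceCenter
  split_ifs
  · field_simp
    ring
  · simp

lemma DFmat_center (hα : 1 < α) (hA : ∀ i j, A i j = if i = j then 0 else 1)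
    (hcard : I.card = k) (hk2 : 2 ≤ k) (i j : Fin N) :
    DFmat A α (faceCenter I k) i j =
      (if i ∈ I ∧ j ∈ I then
        (if i = j then α * (k - 2) / (k - 1) else 0) + (α / (k - 1) - 2 * α / k) else 0)
      - if i = j then 1 else 0 := by
  have hk : (2 : ℝ) ≤ k := by exact_mod_cast hk2
  have hc : 0 < ((k : ℝ)⁻¹) ^ α := Real.rpow_pos_of_pos (by positivity) _
  have hk0 : (k : ℝ) ≠ 0 := by linarith
  have hk1 : (k : ℝ) - 1 ≠ 0 := by linarith
  have hH : Hfun A α (faceCenter I k) ≠ 0 := by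
    rw [center_H hα hA hcard]
    positivity
  -- `α v_j ^ (α - 1)` is `α k c` for `j ∈ I` and zero otherwise.
  have hpow : ∀ l, α * faceCenter I k l ^ (α - 1)
      = if l ∈ I then α * k * ((k : ℝ)⁻¹) ^ α else 0 := by
    intro l
    unfold faceCenter
    split_ifs
    · rw [Real.rpow_sub_one (by positivity)]
      field_simp
    · rw [Real.zero_rpow (by linarith), mul_zero]
  obtain ⟨d, hd⟩ : ∃ d : Fin N → ℝ,
      ∀ l, d l = if l = j then α * faceCenter I k l ^ (α - 1) else 0 := ⟨_, fun _ => rfl⟩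
  rw [DFmat_eq hα A (faceCenter I k) hH i j d hd]
  have hsd : ∑ l, d l = if j ∈ I then α * k * ((k : ℝ)⁻¹) ^ α else 0 := by
    simp only [hd, hpow]
    simp
  -- By symmetry of `A`, the derivative of `H` is `2 ⟨d, A w⟩`, and `d` is concentrated at `j`.
  have hdH : ∑ m, ∑ l, (A m l * d m * faceCenter I k l ^ α + A m l * faceCenter I k m ^ α * d l)
      = 2 * if j ∈ I then α * k * ((k : ℝ)⁻¹) ^ α * ((k - 1) * ((k : ℝ)⁻¹) ^ α) else 0 := by
    have h1 : ∑ m, ∑ l, A m l * d m * faceCenter I k l ^ α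
        = if j ∈ I then α * k * ((k : ℝ)⁻¹) ^ α * ((k - 1) * ((k : ℝ)⁻¹) ^ α) else 0 := by
      have h : ∀ m, ∑ l, A m l * d m * faceCenter I k l ^ α
          = if m = j then (if j ∈ I then
              α * k * ((k : ℝ)⁻¹) ^ α * ((k - 1) * ((k : ℝ)⁻¹) ^ α) else 0) else 0 := by
        intro m
        have h2 : ∑ l, A m l * d m * faceCenter I k l ^ α
            = d m * ∑ l, A m l * faceCenter I k l ^ α := by
          rw [Finset.mul_sum]
          exact Finset.sum_congr rfl fun l _ => by ring
        rw [h2, center_Aw hα hA hcard, hd, hpow]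
        by_cases hm : m = j
        · subst hm
          by_cases hmI : m ∈ I
          · simp only [hmI, if_true]
            ring
          · simp [hmI]
        · simp [hm]
      simp only [h]
      simp
    have h2 : ∑ m, ∑ l, A m l * faceCenter I k m ^ α * d l
        = ∑ m, ∑ l, A m l * d m * faceCenter I k l ^ α := by
      rw [Finset.sum_comm]
      refine Finset.sum_congr rfl fun m _ => Finset.sum_congr rfl fun l _ => ?_
      rw [hA, hA]
      simp only [eq_comm (a := l) (b := m)]
      ring
    simp only [Finset.sum_add_distrib]
    rw [h2, h1]
    ring
  rw [hdH, sum_A_mul hA d, hsd, center_Aw hα hA hcard, center_H hα hA hcard, center_rpow hα, hd,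
    hpow]
  congr 1
  by_cases hi : i ∈ I <;> by_cases hj : j ∈ I <;> by_cases hij : i = j
  all_goals first
    | (subst hij; contradiction)
    | (simp only [hi, hj, hij, if_true, if_false, and_self, and_true, and_false]
       field_simp
       ring)

/-- The action of the complexified Jacobian at the center of a face. -/
lemma DFmat_mulVec (hα : 1 < α) (hA : ∀ i j, A i j = if i = j then 0 else 1)
    (hcard : I.card = k) (hk2 : 2 ≤ k) (x : Fin N → ℂ) (i : Fin N) :
    (((DFmat A α (faceCenter I k)).map (fun r => (r : ℂ))) *ᵥ x) i =
      (if i ∈ I then ((α * (k - 2) / (k - 1) : ℝ) : ℂ) * x i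
        + ((α / (k - 1) - 2 * α / k : ℝ) : ℂ) * ∑ j ∈ I, x j else 0) - x i := by
  simp only [Matrix.mulVec, dotProduct, Matrix.map_apply, DFmat_center hα hA hcard hk2]
  generalize α * ((k : ℝ) - 2) / (k - 1) = a
  generalize α / ((k : ℝ) - 1) - 2 * α / k = b
  have h : ∀ j, (((if i ∈ I ∧ j ∈ I then (if i = j then a else 0) + b else 0)
        - if i = j then 1 else 0 : ℝ) : ℂ) * x j
      = (if i = j then (if i ∈ I then (a : ℂ) * x j else 0) - x j else 0)
        + (if j ∈ I then (if i ∈ I then (b : ℂ) * x j else 0) else 0) := by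
    intro j
    by_cases hij : i = j
    · subst hij
      by_cases hi : i ∈ I
      · simp [hi]
        ring
      · simp [hi]
    · by_cases hi : i ∈ I <;> by_cases hj : j ∈ I <;> simp [hi, hj, hij]
  simp only [h, Finset.sum_add_distrib]
  by_cases hi : i ∈ I
  · simp [hi, Finset.sum_ite_mem, Finset.mul_sum]
    ring
  · simp [hi]

/-! ### Eigenvalues on the tangent space -/

/-- Stability follows once the only eigenvalue other than `-1` is negative. -/
lemma center_stable (hα : 1 < α) (hA : ∀ i j, A i j = if i = j then 0 else 1)
    (hcard : I.card = k) (hk2 : 2 ≤ k) (hneg : α * ((k : ℝ) - 2) / (k - 1) < 1) :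
    IsLinStable A α (faceCenter I k) := by
  intro lam x hx hsum heig
  have heq : ∀ i, _ = lam * x i := fun i =>
    (DFmat_mulVec hα hA hcard hk2 x i).symm.trans (congrFun heig i)
  by_cases hout : ∃ i, i ∉ I ∧ x i ≠ 0
  · obtain ⟨i, hi, hxi⟩ := hout
    have h := heq i
    rw [if_neg hi] at h
    have hl : lam = -1 := mul_right_cancel₀ hxi (by rw [← h]; ring)
    simp [hl]
  · push Not at hout
    have hs : ∑ j ∈ I, x j = 0 := by
      rw [← hsum]
      exact Finset.sum_subset (Finset.subset_univ I) fun i _ hi => hout i hi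
    obtain ⟨i, hxi⟩ := Function.ne_iff.mp hx
    have hi : i ∈ I := by
      by_contra hi
      exact hxi (hout i hi)
    have h := heq i
    rw [if_pos hi, hs] at h
    have hl : lam = ((α * (k - 2) / (k - 1) - 1 : ℝ) : ℂ) :=
      mul_right_cancel₀ hxi (by rw [← h]; push_cast; ring)
    rw [hl, Complex.ofReal_re]
    linarith

/-- Instability comes from the eigenvector `e_a - e_b` with `a ≠ b` in `I`. -/
lemma center_unstable (hα : 1 < α) (hA : ∀ i j, A i j = if i = j then 0 else 1)
    (hcard : I.card = k) (hk2 : 2 ≤ k) (hpos : 1 < α * ((k : ℝ) - 2) / (k - 1)) :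
    IsLinUnstable A α (faceCenter I k) := by
  obtain ⟨a, ha, b, hb, hab⟩ := Finset.one_lt_card.mp (by omega : 1 < I.card)
  refine ⟨((α * (k - 2) / (k - 1) - 1 : ℝ) : ℂ), Pi.single a 1 - Pi.single b 1, ?_, ?_, ?_, ?_⟩
  · intro h
    have := congrFun h a
    simp [hab] at this
  · simp
  · funext i
    rw [DFmat_mulVec hα hA hcard hk2]
    have hs : ∑ j ∈ I, (Pi.single a 1 - Pi.single b 1 : Fin N → ℂ) j = 0 := by
      simp [Pi.single_apply, ha, hb]
    rw [hs]
    by_cases hi : i ∈ I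
    · rw [if_pos hi, Pi.smul_apply, smul_eq_mul]
      push_cast
      ring
    · have h1 : i ≠ a := fun h => hi (h ▸ ha)
      have h2 : i ≠ b := fun h => hi (h ▸ hb)
      simp [hi, h1, h2]
  · rw [Complex.ofReal_re]
    linarith

end Center

/-- For the complete graph (`A_{ij} = 1 - δ_{ij}`, `N ≥ 3`), the center
of a face `Δ_I` with `|I| = k`, `2 ≤ k ≤ N`, is an equilibrium; it is linearly stable for
every `α > 1` when `k = 2`, and for `k ≥ 3` it is linearly stable when
`α < (k-1)/(k-2)` and linearly unstable when `α > (k-1)/(k-2)`. -/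
theorem face_center_stability_complete_graph
    {N : ℕ} (hN : 3 ≤ N) {α : ℝ} (hα : 1 < α)
    (A : Matrix (Fin N) (Fin N) ℝ)
    (hA : ∀ i j, A i j = if i = j then 0 else 1)
    (I : Finset (Fin N)) (k : ℕ) (hcard : I.card = k) (hk2 : 2 ≤ k) (hkN : k ≤ N) :
    Ffield A α (fun i => if i ∈ I then (k : ℝ)⁻¹ else 0) = 0 ∧
    (k = 2 → IsLinStable A α (fun i => if i ∈ I then (k : ℝ)⁻¹ else 0)) ∧
    (3 ≤ k → α < ((k : ℝ) - 1) / ((k : ℝ) - 2) →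
      IsLinStable A α (fun i => if i ∈ I then (k : ℝ)⁻¹ else 0)) ∧
    (3 ≤ k → ((k : ℝ) - 1) / ((k : ℝ) - 2) < α →
      IsLinUnstable A α (fun i => if i ∈ I then (k : ℝ)⁻¹ else 0)) := by
  refine ⟨center_equilibrium hα hA hcard hk2, fun h2 => ?_, fun h3 hlt => ?_, fun h3 hlt => ?_⟩
  · refine center_stable hα hA hcard hk2 ?_
    simp [h2]
  · have hk : (3 : ℝ) ≤ k := by exact_mod_cast h3
    refine center_stable hα hA hcard hk2 ?_
    rw [lt_div_iff₀ (by linarith)] at hlt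
    rwa [div_lt_one (by linarith)]
  · have hk : (3 : ℝ) ≤ k := by exact_mod_cast h3
    refine center_unstable hα hA hcard hk2 ?_
    rw [div_lt_iff₀ (by linarith)] at hlt
    rwa [one_lt_div (by linarith)]
end

section
/- Assume N ≥ 3 and A_{i,j} = 1 − δ_{i,j} (the complete graph). Let v be an equilibrium of F with all coordinates positive which is different from the center (1/N,…,1/N) of Δ. Then the set of values {v_i : 1 ≤ i ≤ N} has exactly two elements. -/
/-!
With `S = ∑ j, v j ^ α`, every coordinate `x = v i` of a positive equilibrium satisfies
`x ^ α * (S - x ^ α) = H(v) * x`. In the variable `u = x ^ (α - 1)` this becomes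
`u ^ β = S * u - H(v)` with `β = (2 * α - 1) / (α - 1) > 1`. The left side is strictly convex and
the right side is affine, so there are at most two solutions `u`, hence at most two values `x`.
A constant `v` would have to be the center, so there are exactly two values.
-/

open Filter Set Matrix

/-- The graph of a strictly convex power meets a line in at most two points. -/
lemma rpow_line_no_three_ordered {β S H a b c : ℝ} (hβ : 1 < β) (ha : 0 < a)
    (hab : a < b) (hbc : b < c) (h1 : a ^ β = S * a - H) (h2 : b ^ β = S * b - H)
    (h3 : c ^ β = S * c - H) : False := by
  have h := (strictConvexOn_rpow hβ).slope_strict_mono_adjacent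
    (show a ∈ Set.Ici (0 : ℝ) from ha.le)
    (show c ∈ Set.Ici (0 : ℝ) from (ha.trans (hab.trans hbc)).le) hab hbc
  simp only [h1, h2, h3] at h
  rw [show S * b - H - (S * a - H) = S * (b - a) by ring,
    show S * c - H - (S * b - H) = S * (c - b) by ring,
    mul_div_cancel_right₀ _ (sub_pos.2 hab).ne',
    mul_div_cancel_right₀ _ (sub_pos.2 hbc).ne'] at h
  exact lt_irrefl _ h

/-- The substitution `u = x ^ (α - 1)` turns the equilibrium equation into the intersection of a
strictly convex power with a line. -/
lemma equilibrium_eq_subst {α S H x : ℝ} (hα : 1 < α) (hx : 0 < x)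
    (h : x ^ α * (S - x ^ α) = H * x) :
    (x ^ (α - 1)) ^ ((2 * α - 1) / (α - 1)) = S * x ^ (α - 1) - H := by
  have hα' : α - 1 ≠ 0 := (sub_pos.2 hα).ne'
  have e1 : x ^ α = x ^ (α - 1) * x := by
    rw [Real.rpow_sub_one hx.ne', div_mul_cancel₀ _ hx.ne']
  have e2 : (x ^ (α - 1)) ^ ((2 * α - 1) / (α - 1)) = x ^ (α - 1) * x ^ α := by
    rw [← Real.rpow_mul hx.le, mul_div_cancel₀ _ hα', ← Real.rpow_add hx]
    congr 1
    ring
  have h' : x ^ (α - 1) * (S - x ^ α) = H := by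
    apply mul_right_cancel₀ hx.ne'
    linear_combination h - (S - x ^ α) * e1
  rw [e2, ← h']
  ring

lemma equilibrium_no_three_ordered {α S H x y z : ℝ} (hα : 1 < α) (hx : 0 < x)
    (hxy : x < y) (hyz : y < z) (h1 : x ^ α * (S - x ^ α) = H * x)
    (h2 : y ^ α * (S - y ^ α) = H * y) (h3 : z ^ α * (S - z ^ α) = H * z) : False := by
  have hα' : 0 < α - 1 := sub_pos.2 hα
  have hy := hx.trans hxy
  refine rpow_line_no_three_ordered (β := (2 * α - 1) / (α - 1)) ?_
    (Real.rpow_pos_of_pos hx _) (Real.rpow_lt_rpow hx.le hxy hα')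
    (Real.rpow_lt_rpow hy.le hyz hα') (equilibrium_eq_subst hα hx h1)
    (equilibrium_eq_subst hα hy h2) (equilibrium_eq_subst hα (hy.trans hyz) h3)
  rw [lt_div_iff₀ hα']
  linarith

/-- For `A i j = 1 - δ i j` the equilibrium condition reads
`v i ^ α * (S - v i ^ α) = H(v) * v i`. Positivity of `v` excludes the junk case `H(v) = 0`. -/
lemma equilibrium_coord_eq {N : ℕ} {α : ℝ} (A : Matrix (Fin N) (Fin N) ℝ)
    (hA : ∀ i j, A i j = if i = j then 0 else 1) (v : Fin N → ℝ)
    (heq : Ffield A α v = 0) (hpos : ∀ i, 0 < v i) (i : Fin N) :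
    v i ^ α * ((∑ j, v j ^ α) - v i ^ α) = Hfun A α v * v i := by
  have h : piFun A α v i = v i := sub_eq_zero.1 (congrFun heq i)
  have hs : ∑ j, A i j * v j ^ α = (∑ j, v j ^ α) - v i ^ α := by
    have : ∀ j, A i j * v j ^ α = v j ^ α - if i = j then v j ^ α else 0 := by
      intro j
      rw [hA]
      split_ifs <;> simp
    simp only [this, Finset.sum_sub_distrib, Finset.sum_ite_eq, Finset.mem_univ, if_true]
  unfold piFun at h
  rw [hs] at h
  have hH : Hfun A α v ≠ 0 := by
    intro h0
    rw [h0, div_zero] at h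
    exact (hpos i).ne h
  rw [div_eq_iff hH] at h
  rw [h, mul_comm]

/-- For the complete graph (`A_{ij} = 1 - δ_{ij}`, `N ≥ 3`), any
equilibrium with all coordinates positive which is different from the center
`(1/N, …, 1/N)` of `Δ` takes exactly two distinct coordinate values. -/
theorem interior_equilibrium_two_values
    {N : ℕ} (hN : 3 ≤ N) {α : ℝ} (hα : 1 < α)
    (A : Matrix (Fin N) (Fin N) ℝ)
    (hA : ∀ i j, A i j = if i = j then 0 else 1)
    (v : Fin N → ℝ) (hv : v ∈ simplexD A) (heq : Ffield A α v = 0)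
    (hpos : ∀ i, 0 < v i) (hne : v ≠ fun _ => (N : ℝ)⁻¹) :
    (Set.range v).ncard = 2 := by
  have key := equilibrium_coord_eq A hA v heq hpos
  have hfin : (Set.range v).Finite := Set.finite_range v
  apply le_antisymm
  · by_contra! hcon
    obtain ⟨_, ⟨i, rfl⟩, _, ⟨j, rfl⟩, _, ⟨k, rfl⟩, hij, hik, hjk⟩ :=
      (Set.two_lt_ncard hfin).1 hcon
    have T : ∀ a b c, v a < v b → v b < v c → False := fun a b c hab hbc =>
      equilibrium_no_three_ordered hα (hpos a) hab hbc (key a) (key b) (key c)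
    rcases hij.lt_or_gt with h1 | h1 <;> rcases hik.lt_or_gt with h2 | h2 <;>
      rcases hjk.lt_or_gt with h3 | h3
    · exact T _ _ _ h1 h3
    · exact T _ _ _ h2 h3
    · exact T _ _ _ h1 h3
    · exact T _ _ _ h2 h1
    · exact T _ _ _ h1 h2
    · exact T _ _ _ h1 h2
    · exact T _ _ _ h3 h2
    · exact T _ _ _ h3 h1
  · by_contra! hcon
    have hconst : ∀ i j, v i = v j := fun i j =>
      (Set.ncard_le_one hfin).1 (by omega) _ ⟨i, rfl⟩ _ ⟨j, rfl⟩
    apply hne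
    funext i
    have hsum := hv.2.1
    rw [Finset.sum_congr rfl fun j _ => hconst j i] at hsum
    simp only [Finset.sum_const, Finset.card_univ, Fintype.card_fin, nsmul_eq_mul] at hsum
    exact eq_inv_of_mul_eq_one_right hsum
end

section
/- Assume N ≥ 3, A_{i,j} = 1 − δ_{i,j} (the complete graph), and α ≥ (N−1)/(N−2). Let 1 ≤ k ≤ N/2 and let v ∈ E_k. If k > 1, or if k = 1 and t(v) < 1, then v is a linearly unstable equilibrium. -/
/-!
Write `S = ∑ v_i^α`. If `v` is a positive equilibrium and two coordinates `p ≠ q` have the same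
value `c`, then columns `p` and `q` of the Jacobian differ only in rows `p` and `q`, so `e_p - e_q`
is a tangent eigenvector (`unstable_of_pair`). Using the equilibrium equation
`c = c^α (S - c^α) / H`, its eigenvalue is `α (S - 2 c^α) / (S - c^α) - 1`. For
`α ≥ (N-1)/(N-2)` this is positive as soon as `N c^α < S`.

For `v ∈ E_k` the two block values differ, because `v` is not the center, so the smaller one
satisfies `N c^α < S` (`card_mul_rpow_lt_sum`). It remains to find two indices in the block of the
smaller value: the last block has `N - k ≥ 2` elements, and the first block, which is needed only
if `t(v) > 1`, has at least two elements when `k > 1`.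
-/

open Filter Set Matrix

/-- The partial derivatives of `F` at a point with positive coordinates and `H ≠ 0`. The last
numerator carries `∂_j H = 2 α v_j^{α-1} (A v^α)_j`, which uses the symmetry of `A`. -/
lemma DFmat_apply {N : ℕ} (A : Matrix (Fin N) (Fin N) ℝ) (hsymm : ∀ i j, A i j = A j i) (α : ℝ)
    (v : Fin N → ℝ) (hpos : ∀ i, 0 < v i) (hH : Hfun A α v ≠ 0) (i j : Fin N) :
    DFmat A α v i j =
      ((if i = j then α * v j ^ (α - 1) else 0) * (∑ l, A i l * v l ^ α)
          + v i ^ α * (A i j * (α * v j ^ (α - 1)))) / Hfun A α v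
        - v i ^ α * (∑ l, A i l * v l ^ α)
            * (2 * (α * v j ^ (α - 1)) * (∑ l, A j l * v l ^ α)) / Hfun A α v ^ 2
        - (if i = j then 1 else 0) := by
  have hcoord : ∀ l : Fin N, HasDerivAt (fun t : ℝ => (v + t • (Pi.single j 1 : Fin N → ℝ)) l)
      (if l = j then 1 else 0) 0 := by
    intro l
    have h := ((hasDerivAt_id (0 : ℝ)).mul_const ((Pi.single j (1 : ℝ) : Fin N → ℝ) l)).const_add
      (v l)
    simpa [Pi.single_apply] using h
  have hpow : ∀ l : Fin N, HasDerivAt (fun t : ℝ => (v + t • (Pi.single j 1 : Fin N → ℝ)) l ^ α)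
      (if l = j then α * v j ^ (α - 1) else 0) 0 := by
    intro l
    have h := (hcoord l).rpow_const (p := α) (Or.inl (by simpa using (hpos l).ne'))
    convert h using 1
    by_cases hl : l = j <;> simp [hl]
  have hT : ∀ r : Fin N, HasDerivAt
      (fun t : ℝ => ∑ l, A r l * (v + t • (Pi.single j 1 : Fin N → ℝ)) l ^ α)
      (A r j * (α * v j ^ (α - 1))) 0 := by
    intro r
    have h := HasDerivAt.fun_sum (u := Finset.univ) (fun l _ => (hpow l).const_mul (A r l))
    simpa using h
  have hHd : HasDerivAt (fun t : ℝ => Hfun A α (v + t • (Pi.single j 1 : Fin N → ℝ)))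
      (2 * (α * v j ^ (α - 1)) * (∑ l, A j l * v l ^ α)) 0 := by
    have h := HasDerivAt.fun_sum (u := Finset.univ) (fun r _ => (hpow r).fun_mul (hT r))
    have hfun : (fun t : ℝ => Hfun A α (v + t • (Pi.single j 1 : Fin N → ℝ))) =
        fun t : ℝ => ∑ r, (v + t • (Pi.single j 1 : Fin N → ℝ)) r ^ α *
          ∑ l, A r l * (v + t • (Pi.single j 1 : Fin N → ℝ)) l ^ α := by
      funext t
      unfold Hfun
      refine Finset.sum_congr rfl fun r _ => ?_
      rw [Finset.mul_sum]
      exact Finset.sum_congr rfl fun l _ => by ring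
    rw [hfun]
    refine h.congr_deriv ?_
    simp only [zero_smul, add_zero, Finset.sum_add_distrib, ite_mul, zero_mul,
      Finset.sum_ite_eq', Finset.mem_univ, if_true]
    have : ∑ r, v r ^ α * (A r j * (α * v j ^ (α - 1)))
        = α * v j ^ (α - 1) * ∑ l, A j l * v l ^ α := by
      rw [Finset.mul_sum]
      exact Finset.sum_congr rfl fun r _ => by rw [hsymm r j]; ring
    rw [this]
    ring
  have hF := (((hpow i).fun_mul (hT i)).fun_div hHd (by simpa using hH)).fun_sub (hcoord i)
  unfold DFmat lineDeriv
  have hfun : (fun t : ℝ => Ffield A α (v + t • (Pi.single j 1 : Fin N → ℝ)) i) = fun t : ℝ =>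
      (v + t • (Pi.single j 1 : Fin N → ℝ)) i ^ α *
        (∑ l, A i l * (v + t • (Pi.single j 1 : Fin N → ℝ)) l ^ α) /
          Hfun A α (v + t • (Pi.single j 1 : Fin N → ℝ))
        - (v + t • (Pi.single j 1 : Fin N → ℝ)) i := rfl
  rw [hfun, hF.deriv]
  simp only [zero_smul, add_zero]
  field_simp

/-- If two coordinates `p ≠ q` of a positive equilibrium on the complete graph agree and `v_p^α`
lies strictly below the average of all `v_i^α`, then `e_p - e_q` is an eigenvector with positive
eigenvalue, as soon as `α ≥ (N-1)/(N-2)`. -/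
lemma unstable_of_pair {N : ℕ} (hN : 3 ≤ N) {α : ℝ} (A : Matrix (Fin N) (Fin N) ℝ)
    (hA : ∀ i j, A i j = if i = j then 0 else 1)
    (v : Fin N → ℝ) (heq : Ffield A α v = 0) (hpos : ∀ i, 0 < v i)
    (hαN : ((N : ℝ) - 1) / ((N : ℝ) - 2) ≤ α)
    (p q : Fin N) (hpq : p ≠ q) (hvpq : v p = v q)
    (hlt : (N : ℝ) * v p ^ α < ∑ l, v l ^ α) :
    IsLinUnstable A α v := by
  have hsymm : ∀ i j, A i j = A j i := fun i j => by simp only [hA, eq_comm]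
  have hT : ∀ r, ∑ l, A r l * v l ^ α = (∑ l, v l ^ α) - v r ^ α := by
    intro r
    have : ∀ l, A r l * v l ^ α = v l ^ α - (if r = l then v l ^ α else 0) := by
      intro l
      rw [hA]
      split_ifs <;> ring
    simp [this, Finset.sum_sub_distrib]
  have hp := congrFun heq p
  simp only [Ffield, piFun, Pi.zero_apply, hT] at hp
  have hH : Hfun A α v ≠ 0 := by
    intro h0
    rw [h0, div_zero] at hp
    linarith [hpos p]
  set S := ∑ l, v l ^ α with hS
  set c := v p with hc
  have hc0 : 0 < c := hpos p
  have hw0 : 0 < c ^ α := Real.rpow_pos_of_pos hc0 α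
  have hcw : c ^ (α - 1) = c ^ α / c := Real.rpow_sub_one hc0.ne' α
  have hN3 : (3 : ℝ) ≤ N := by exact_mod_cast hN
  have hT0 : 0 < S - c ^ α := by nlinarith
  -- The equilibrium equation at `p`, solved for `H`.
  have hHval : Hfun A α v = c ^ α * (S - c ^ α) / c := by
    field_simp at hp
    field_simp
    linarith
  let lam : ℝ := α * c ^ (α - 1) * (S - c ^ α - c ^ α) / Hfun A α v - 1
  have hlamval : lam = α * (S - c ^ α - c ^ α) / (S - c ^ α) - 1 := by
    simp only [lam]
    rw [hHval, hcw]
    field_simp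
  have hlam : 0 < lam := by
    rw [hlamval, sub_pos, lt_div_iff₀ hT0, one_mul]
    have hX : 0 < S - c ^ α - c ^ α := by nlinarith
    refine lt_of_lt_of_le ?_ (mul_le_mul_of_nonneg_right hαN hX.le)
    rw [div_mul_eq_mul_div, lt_div_iff₀ (by linarith)]
    linarith
  -- `e_p - e_q` is an eigenvector: the entries of columns `p` and `q` differ only in rows `p`, `q`.
  have hcol : ∀ i, DFmat A α v i p - DFmat A α v i q =
      lam * ((if i = p then 1 else 0) - (if i = q then 1 else 0)) := by
    intro i
    rw [DFmat_apply A hsymm α v hpos hH i p, DFmat_apply A hsymm α v hpos hH i q]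
    simp only [hT]
    simp only [← hvpq, hA, ← hc, lam]
    by_cases h1 : i = p
    · simp only [h1, hpq, if_true, if_false, ← hc]
      ring
    · by_cases h2 : i = q
      · simp only [h2, if_true, if_false, hpq.symm, ← hvpq]
        ring
      · simp only [h1, h2, if_false]
        ring
  refine ⟨(lam : ℂ), Pi.single p 1 - Pi.single q 1, ?_, ?_, ?_, by simpa using hlam⟩
  · intro h
    have := congrFun h p
    simp [hpq] at this
  · simp [Finset.sum_sub_distrib]
  · funext i
    rw [Matrix.mulVec_sub, Matrix.mulVec_single_one, Matrix.mulVec_single_one]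
    have := congrArg (fun r : ℝ => (r : ℂ)) (hcol i)
    simp only [Complex.ofReal_sub, Complex.ofReal_mul] at this
    simp only [Pi.sub_apply, Pi.smul_apply, smul_eq_mul, Matrix.col_apply, Matrix.map_apply,
      Pi.single_apply, this]
    split_ifs <;> simp

/-- A minimal value of `v` that is not the only value lies strictly below the `α`-power mean. -/
lemma card_mul_rpow_lt_sum {N : ℕ} {α : ℝ} (hα : 1 < α) (v : Fin N → ℝ) (hpos : ∀ i, 0 < v i)
    (p r : Fin N) (hmin : ∀ i, v p ≤ v i) (hr : v p < v r) :
    (N : ℝ) * v p ^ α < ∑ l, v l ^ α := by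
  have h : ∑ _l : Fin N, v p ^ α < ∑ l, v l ^ α :=
    Finset.sum_lt_sum
      (fun l _ => Real.rpow_le_rpow (hpos p).le (hmin l) (by linarith))
      ⟨r, Finset.mem_univ r, Real.rpow_lt_rpow (hpos p).le hr (by linarith)⟩
  simpa using h

/-- Complete graph (`A_{ij} = 1 - δ_{ij}`, `N ≥ 3`),
`α ≥ (N-1)/(N-2)`. Let `1 ≤ k ≤ N/2` and `v ∈ E_k` (an equilibrium with positive
coordinates, different from the center, whose first `k` coordinates agree and whose last
`N - k` coordinates agree), and let `t(v) = v_N / v_1`. If `k > 1`, or if `k = 1` and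
`t(v) < 1`, then `v` is linearly unstable. -/
theorem Ek_unstable_large_alpha
    {N : ℕ} (hN : 3 ≤ N) {α : ℝ} (hα : 1 < α)
    (A : Matrix (Fin N) (Fin N) ℝ)
    (hA : ∀ i j, A i j = if i = j then 0 else 1)
    (k : ℕ) (hk1 : 1 ≤ k) (hk2 : 2 * k ≤ N)
    (v : Fin N → ℝ) (hv : v ∈ simplexD A) (heq : Ffield A α v = 0)
    (hpos : ∀ i, 0 < v i) (hne : v ≠ fun _ => (N : ℝ)⁻¹)
    (hfirst : ∀ i j : Fin N, (i : ℕ) < k → (j : ℕ) < k → v i = v j)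
    (hlast : ∀ i j : Fin N, k ≤ (i : ℕ) → k ≤ (j : ℕ) → v i = v j)
    (hαN : ((N : ℝ) - 1) / ((N : ℝ) - 2) ≤ α)
    (hcase : 1 < k ∨ (k = 1 ∧ v ⟨N - 1, by omega⟩ / v ⟨0, by omega⟩ < 1)) :
    IsLinUnstable A α v := by
  have h0k : ∀ i : Fin N, (i : ℕ) < k → v i = v ⟨0, by omega⟩ := fun i hi =>
    hfirst _ _ hi hk1
  have hlk : ∀ i : Fin N, k ≤ (i : ℕ) → v i = v ⟨N - 1, by omega⟩ := fun i hi =>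
    hlast _ _ hi (by simp only; omega)
  have hab : v ⟨0, by omega⟩ ≠ v ⟨N - 1, by omega⟩ := by
    intro h
    apply hne
    have hall : ∀ i, v i = v ⟨0, by omega⟩ := fun i => by
      rcases lt_or_ge (i : ℕ) k with hi | hi
      · exact h0k i hi
      · rw [hlk i hi, h]
    have hsum := hv.2.1
    rw [Finset.sum_congr rfl fun i _ => hall i] at hsum
    simp only [Finset.sum_const, Finset.card_univ, Fintype.card_fin, nsmul_eq_mul] at hsum
    funext i
    rw [hall i]
    exact eq_inv_of_mul_eq_one_right hsum
  rcases lt_or_gt_of_ne hab with hlt | hgt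
  · have hk : 1 < k := by
      rcases hcase with h | ⟨-, h⟩
      · exact h
      · rw [div_lt_one (hpos _)] at h
        exact absurd h hlt.not_gt
    refine unstable_of_pair hN A hA v heq hpos hαN ⟨0, by omega⟩ ⟨1, by omega⟩ (by simp)
      (h0k ⟨1, by omega⟩ hk).symm
      (card_mul_rpow_lt_sum hα v hpos _ ⟨N - 1, by omega⟩ (fun i => ?_) hlt)
    rcases lt_or_ge (i : ℕ) k with hi | hi
    · exact (h0k i hi).ge
    · rw [hlk i hi]
      exact hlt.le
  · refine unstable_of_pair hN A hA v heq hpos hαN ⟨N - 1, by omega⟩ ⟨N - 2, by omega⟩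
      (by simp only [ne_eq, Fin.mk.injEq]; omega)
      (hlk ⟨N - 2, by omega⟩ (by simp only; omega)).symm
      (card_mul_rpow_lt_sum hα v hpos _ ⟨0, by omega⟩ (fun i => ?_) hgt)
    rcases lt_or_ge (i : ℕ) k with hi | hi
    · rw [h0k i hi]
      exact hgt.le
    · exact (hlk i hi).ge
end

section
/- Assume N ≥ 3 and A_{i,j} = 1 − δ_{i,j} (the complete graph). Then the set C = {v ∈ Δ : F(v) = 0} of equilibria in Δ is finite. -/
/-!
At an equilibrium `v`, every positive coordinate `x` solves `x ^ (α - 1) * (S - x ^ α) = H`, where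
`S = ∑ j, v j ^ α` and `H = Hfun A α v`. The left-hand side has a single critical point on
`(0, ∞)`, so the positive coordinates take at most two values `x` and `y`
(`at_most_two_values`). If `k` coordinates equal `x` and `l ≥ 1` coordinates equal `y = t * x`, then
comparing the two equations gives
`(l - 1) t ^ (2 α - 1) - l t ^ α + k t ^ (α - 1) - (k - 1) = 0`.
This is a nontrivial generalized polynomial with distinct exponents, so it has finitely many
positive roots (`finite_zeros_rpow_sum`, an iteration of Rolle's theorem). Since `∑ i, v i = 1`, the
vector `v` is determined by the level sets `{v = x}`, `{v = y}` and the ratio `t`.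
-/

open Filter Set Matrix

/-- A consequence of Rolle's theorem: if `f'` has finitely many zeros on `(0, ∞)`, so does `f`.
The zeros of `f` are separated by critical points, so `z ↦ {critical points < z}` is injective on
them. -/
lemma finite_zeros_of_deriv {f f' : ℝ → ℝ} (hf : ∀ t, 0 < t → HasDerivAt f (f' t) t)
    (hfin : {t | 0 < t ∧ f' t = 0}.Finite) : {t | 0 < t ∧ f t = 0}.Finite := by
  have key : ∀ a b, 0 < a → f a = 0 → f b = 0 → a < b →
      {c | (0 < c ∧ f' c = 0) ∧ c < a} ≠ {c | (0 < c ∧ f' c = 0) ∧ c < b} := by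
    intro a b ha hfa hfb hab heq
    obtain ⟨c, hc, hc0⟩ := exists_hasDerivAt_eq_zero hab
      (fun t ht => (hf t (ha.trans_le ht.1)).continuousAt.continuousWithinAt)
      (hfa.trans hfb.symm) (fun t ht => hf t (ha.trans ht.1))
    have hcb : c ∈ {c | (0 < c ∧ f' c = 0) ∧ c < b} := ⟨⟨ha.trans hc.1, hc0⟩, hc.2⟩
    rw [← heq] at hcb
    exact absurd hcb.2 (not_lt.2 hc.1.le)
  refine Set.Finite.of_injOn (f := fun z => {c | (0 < c ∧ f' c = 0) ∧ c < z})
    (t := 𝒫 {t | 0 < t ∧ f' t = 0}) (fun z _ c hc => hc.1) ?_ hfin.powerset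
  intro a ha b hb hab
  rcases lt_trichotomy a b with h | h | h
  · exact absurd hab (key a b ha.1 ha.2 hb.2 h)
  · exact h
  · exact absurd hab.symm (key b a hb.1 hb.2 ha.2 h)

/-- A generalized polynomial with distinct real exponents and a nonzero coefficient has finitely
many positive zeros. -/
lemma finite_zeros_rpow_sum {ι : Type*} [DecidableEq ι] (e : ι → ℝ) (he : Function.Injective e)
    (s : Finset ι) : ∀ c : ι → ℝ, (∃ i ∈ s, c i ≠ 0) →
      {t : ℝ | 0 < t ∧ ∑ i ∈ s, c i * t ^ e i = 0}.Finite := by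
  induction s using Finset.induction_on with
  | empty => rintro c ⟨i, hi, -⟩; simp at hi
  | insert a s ha ih =>
    intro c hc
    by_cases h0 : ∃ i ∈ s, c i ≠ 0
    swap
    · push Not at h0
      have hca : c a ≠ 0 := by
        obtain ⟨i, hi, hci⟩ := hc
        rcases Finset.mem_insert.1 hi with rfl | hi
        · exact hci
        · exact absurd (h0 i hi) hci
      convert Set.finite_empty using 1
      ext t
      simp only [mem_ofPred_eq, mem_empty_iff_false, iff_false, not_and]
      intro ht
      rw [Finset.sum_insert ha, Finset.sum_eq_zero (s := s) (fun i hi => by rw [h0 i hi, zero_mul]),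
        add_zero]
      exact mul_ne_zero hca (Real.rpow_pos_of_pos ht _).ne'
    -- Dividing by `t ^ e a` makes the `a`-term constant; differentiation then removes it.
    have h1 := ih (fun i => c i * (e i - e a)) (by
      obtain ⟨i, hi, hci⟩ := h0
      refine ⟨i, hi, mul_ne_zero hci (sub_ne_zero.2 fun h => ha ?_)⟩
      rwa [← he h])
    have h2 : {t : ℝ | 0 < t ∧
        ∑ i ∈ s, c i * ((e i - e a) * t ^ (e i - e a - 1)) = 0}.Finite := by
      refine h1.subset ?_
      rintro t ⟨ht, h⟩
      refine ⟨ht, ?_⟩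
      have : ∑ i ∈ s, c i * (e i - e a) * t ^ e i
          = t ^ (e a + 1) * ∑ i ∈ s, c i * ((e i - e a) * t ^ (e i - e a - 1)) := by
        rw [Finset.mul_sum]
        refine Finset.sum_congr rfl fun i _ => ?_
        have : t ^ e i = t ^ (e a + 1) * t ^ (e i - e a - 1) := by
          rw [← Real.rpow_add ht]; congr 1; ring
        rw [this]; ring
      rw [this, h, mul_zero]
    have h3 := finite_zeros_of_deriv (f := fun t => c a + ∑ i ∈ s, c i * t ^ (e i - e a))
      (fun t ht => (HasDerivAt.fun_sum fun i _ =>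
        (Real.hasDerivAt_rpow_const (p := e i - e a) (Or.inl ht.ne')).const_mul (c i)).const_add
          (c a)) h2
    refine h3.subset ?_
    rintro t ⟨ht, h⟩
    refine ⟨ht, ?_⟩
    have : ∑ i ∈ insert a s, c i * t ^ e i
        = t ^ e a * (c a + ∑ i ∈ s, c i * t ^ (e i - e a)) := by
      rw [Finset.sum_insert ha, mul_add, Finset.mul_sum, mul_comm (c a)]
      congr 1
      refine Finset.sum_congr rfl fun i _ => ?_
      have : t ^ e i = t ^ e a * t ^ (e i - e a) := by
        rw [← Real.rpow_add ht]; congr 1; ring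
      rw [this]; ring
    rw [this] at h
    exact (mul_eq_zero.1 h).resolve_left (Real.rpow_pos_of_pos ht _).ne'

/-- Finiteness of the possible ratios `t = y / x` of the two positive values of an equilibrium, where
`x` is taken `k` times and `y` is taken `l` times. The coefficient of `t ^ α` in the equation is
`-l`, so the equation is nontrivial for `l ≠ 0`. -/
lemma finite_ratios {α : ℝ} (hα : 1 < α) (k l : ℝ) (hl : l ≠ 0) :
    {t : ℝ | 0 < t ∧ (k - 1) + l * t ^ α = t ^ (α - 1) * (k + (l - 1) * t ^ α)}.Finite := by
  have he : Function.Injective (![2 * α - 1, α, α - 1, 0] : Fin 4 → ℝ) := by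
    intro i j h
    fin_cases i <;> fin_cases j <;> simp at h ⊢ <;> linarith
  refine (finite_zeros_rpow_sum _ he Finset.univ ![l - 1, -l, k, -(k - 1)]
    ⟨1, Finset.mem_univ _, by simpa using hl⟩).subset ?_
  rintro t ⟨ht, h⟩
  refine ⟨ht, ?_⟩
  have h2 : t ^ (2 * α - 1) = t ^ (α - 1) * t ^ α := by
    rw [← Real.rpow_add ht]; congr 1; ring
  simp only [Fin.sum_univ_four, Matrix.cons_val, h2, Real.rpow_zero]
  linear_combination -h

/-- The function `x ↦ x ^ (α - 1) * (S - x ^ α)` takes no value three times on `(0, ∞)`, because it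
has at most one critical point there. -/
lemma not_three_values {α : ℝ} (hα : 1 < α) {S H a b c : ℝ} (ha : 0 < a) (hab : a < b)
    (hbc : b < c) (hfa : a ^ (α - 1) * (S - a ^ α) = H) (hfb : b ^ (α - 1) * (S - b ^ α) = H)
    (hfc : c ^ (α - 1) * (S - c ^ α) = H) : False := by
  have hd : ∀ t : ℝ, 0 < t → HasDerivAt (fun x : ℝ => x ^ (α - 1) * (S - x ^ α))
      (t ^ (α - 2) * (S * (α - 1) - (2 * α - 1) * t ^ α)) t := by
    intro t ht
    have h1 := (Real.hasDerivAt_rpow_const (x := t) (p := α - 1) (Or.inl ht.ne')).mul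
      ((Real.hasDerivAt_rpow_const (x := t) (p := α) (Or.inl ht.ne')).const_sub S)
    refine h1.congr_deriv ?_
    have e1 : t ^ (α - 1) = t ^ (α - 2) * t := by
      rw [← Real.rpow_add_one ht.ne']; congr 1; ring
    have e2 : t ^ α = t ^ (α - 1) * t := by
      rw [← Real.rpow_add_one ht.ne']; congr 1; ring
    have e3 : α - 1 - 1 = α - 2 := by ring
    rw [e3, e2, e1]; ring
  have crit : ∀ x y : ℝ, 0 < x → x < y → x ^ (α - 1) * (S - x ^ α) = H →
      y ^ (α - 1) * (S - y ^ α) = H →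
      ∃ z ∈ Ioo x y, (2 * α - 1) * z ^ α = S * (α - 1) := by
    intro x y hx hxy h1 h2
    obtain ⟨z, hz, h⟩ := exists_hasDerivAt_eq_zero hxy
      (fun t ht => (hd t (hx.trans_le ht.1)).continuousAt.continuousWithinAt)
      (h1.trans h2.symm) (fun t ht => hd t (hx.trans ht.1))
    refine ⟨z, hz, ?_⟩
    have := (mul_eq_zero.1 h).resolve_left (Real.rpow_pos_of_pos (hx.trans hz.1) _).ne'
    linarith
  obtain ⟨z, hz, h1⟩ := crit a b ha hab hfa hfb
  obtain ⟨w, hw, h2⟩ := crit b c (ha.trans hab) hbc hfb hfc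
  have hzw : z ^ α < w ^ α :=
    Real.rpow_lt_rpow (ha.trans hz.1).le (hz.2.trans hw.1) (by linarith)
  nlinarith

lemma at_most_two_values {α : ℝ} (hα : 1 < α) {S H a b c : ℝ} (ha : 0 < a) (hb : 0 < b)
    (hc : 0 < c) (hfa : a ^ (α - 1) * (S - a ^ α) = H) (hfb : b ^ (α - 1) * (S - b ^ α) = H)
    (hfc : c ^ (α - 1) * (S - c ^ α) = H) (hab : b ≠ a) (hac : c ≠ a) : b = c := by
  by_contra hbc
  rcases lt_or_gt_of_ne hab with h1 | h1 <;> rcases lt_or_gt_of_ne hac with h2 | h2 <;>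
    rcases lt_or_gt_of_ne hbc with h3 | h3
  · exact not_three_values hα hb h3 h2 hfb hfc hfa
  · exact not_three_values hα hc h3 h1 hfc hfb hfa
  · exact not_three_values hα hb h1 h2 hfb hfa hfc
  · linarith
  · linarith
  · exact not_three_values hα hc h2 h1 hfc hfa hfb
  · exact not_three_values hα ha h1 h3 hfa hfb hfc
  · exact not_three_values hα ha h2 h3 hfa hfc hfb

/-- The vector proportional to `1` on `K`, to `t` on `L`, and vanishing elsewhere. For disjoint `K`
and `L` the denominator normalizes its sum to `1`. -/
noncomputable def twoLevel {N : ℕ} (K L : Finset (Fin N)) (t : ℝ) : Fin N → ℝ :=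
  fun i => (if i ∈ K then 1 else if i ∈ L then t else 0) / ((K.card : ℝ) + L.card * t)

/-- The equilibrium equation at the coordinates in the support. Here `Hfun A α v ≠ 0`, since
otherwise `piFun A α v` would vanish by the convention `x / 0 = 0`, and so would `v`. -/
lemma equilibrium_eq {N : ℕ} {α : ℝ} {A : Matrix (Fin N) (Fin N) ℝ}
    (hA : ∀ i j, A i j = if i = j then 0 else 1) {v : Fin N → ℝ}
    (hF : Ffield A α v = 0) (i : Fin N) (hi : 0 < v i) :
    v i ^ (α - 1) * ((∑ j, v j ^ α) - v i ^ α) = Hfun A α v := by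
  have h : v i ^ α * (∑ j, A i j * v j ^ α) / Hfun A α v = v i := by
    have := congrFun hF i
    simp only [Ffield, piFun, Pi.zero_apply] at this
    linarith
  have hH : Hfun A α v ≠ 0 := by
    intro h0
    rw [h0, div_zero] at h
    exact hi.ne h
  have hsum : ∑ j, A i j * v j ^ α = (∑ j, v j ^ α) - v i ^ α := by
    have : ∀ j, A i j * v j ^ α = v j ^ α - if i = j then v j ^ α else 0 := by
      intro j; rw [hA]; split_ifs <;> simp
    simp only [this, Finset.sum_sub_distrib, Finset.sum_ite_eq, Finset.mem_univ, if_true]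
  rw [hsum, div_eq_iff hH] at h
  have e : v i ^ α = v i * v i ^ (α - 1) := by
    rw [mul_comm, ← Real.rpow_add_one hi.ne']; congr 1; ring
  refine mul_left_cancel₀ hi.ne' ?_
  rw [← h, ← mul_assoc, ← e]

/-- For the complete graph (`A_{ij} = 1 - δ_{ij}`, `N ≥ 3`), the set
`C = {v ∈ Δ : F(v) = 0}` of equilibria in `Δ` is finite. -/
theorem equilibria_finite_complete_graph
    {N : ℕ} (hN : 3 ≤ N) {α : ℝ} (hα : 1 < α)
    (A : Matrix (Fin N) (Fin N) ℝ)
    (hA : ∀ i j, A i j = if i = j then 0 else 1) :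
    {v : Fin N → ℝ | v ∈ simplexD A ∧ Ffield A α v = 0}.Finite := by
  classical
  -- The value `t = 1` with `L = ∅` accounts for the equilibria that are uniform on their support.
  let T : Finset (Fin N) → Finset (Fin N) → Set ℝ := fun K L =>
    {1} ∪ {t : ℝ | (L.card : ℝ) ≠ 0 ∧ 0 < t ∧ ((K.card : ℝ) - 1) + L.card * t ^ α
      = t ^ (α - 1) * (K.card + ((L.card : ℝ) - 1) * t ^ α)}
  have hT : ∀ K L, (T K L).Finite := by
    intro K L
    refine (Set.finite_singleton _).union ?_
    by_cases hl : (L.card : ℝ) = 0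
    · simp [hl]
    · exact (finite_ratios hα _ _ hl).subset fun t ht => ht.2
  refine (Set.finite_iUnion fun K => Set.finite_iUnion fun L =>
    (hT K L).image (twoLevel K L)).subset ?_
  rintro v ⟨⟨hv0, hv1, -⟩, hF⟩
  have heq := equilibrium_eq hA hF
  obtain ⟨i₀, hi₀⟩ : ∃ i, 0 < v i := by
    by_contra! hcon
    have : ∑ i, v i ≤ 0 := Finset.sum_nonpos fun i _ => hcon i
    linarith
  set x := v i₀ with hx
  set K := Finset.univ.filter fun i => v i = x with hK
  set L := Finset.univ.filter fun i => v i ≠ x ∧ 0 < v i with hL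
  -- All the coordinates in `L` share one value, written as `t * x`.
  obtain ⟨t, ht, hLt, hor⟩ : ∃ t : ℝ, 0 < t ∧ (∀ i ∈ L, v i = t * x) ∧
      ((L = ∅ ∧ t = 1) ∨ ∃ j ∈ L, v j = t * x) := by
    rcases L.eq_empty_or_nonempty with h | ⟨j, hj⟩
    · exact ⟨1, one_pos, by simp [h], Or.inl ⟨h, rfl⟩⟩
    · have hj' := (Finset.mem_filter.1 hj).2
      have e : v j = v j / x * x := by field_simp
      refine ⟨v j / x, div_pos hj'.2 hi₀, fun i hi => ?_, Or.inr ⟨j, hj, e⟩⟩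
      have hi' := (Finset.mem_filter.1 hi).2
      rw [← e]
      exact at_most_two_values hα hi₀ hi'.2 hj'.2 (heq i₀ hi₀) (heq i hi'.2) (heq j hj'.2)
        hi'.1 hj'.1
  have hv : ∀ i, v i = (if i ∈ K then 1 else if i ∈ L then t else 0) * x := by
    intro i
    by_cases hiK : i ∈ K
    · rw [if_pos hiK, one_mul]; exact (Finset.mem_filter.1 hiK).2
    · by_cases hiL : i ∈ L
      · rw [if_neg hiK, if_pos hiL, hLt i hiL]
      · rw [if_neg hiK, if_neg hiL, zero_mul]
        by_contra hne
        refine hiL (Finset.mem_filter.2 ⟨Finset.mem_univ _, fun h => hiK ?_,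
          lt_of_le_of_ne (hv0 i) (Ne.symm hne)⟩)
        exact Finset.mem_filter.2 ⟨Finset.mem_univ _, h⟩
  have hdisj : ∀ i ∈ L, i ∉ K := fun i hi hiK =>
    (Finset.mem_filter.1 hi).2.1 (Finset.mem_filter.1 hiK).2
  have hsum : ∀ a b : ℝ, ∑ i, (if i ∈ K then a else if i ∈ L then b else 0)
      = K.card * a + L.card * b := by
    intro a b
    have : ∀ i, (if i ∈ K then a else if i ∈ L then b else 0)
        = (if i ∈ K then a else 0) + (if i ∈ L then b else 0) := by
      intro i
      by_cases hiL : i ∈ L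
      · simp [hiL, hdisj i hiL]
      · simp [hiL]
    simp only [this, Finset.sum_add_distrib, Finset.sum_ite_mem, Finset.univ_inter,
      Finset.sum_const, nsmul_eq_mul]
  have hnorm : ((K.card : ℝ) + L.card * t) * x = 1 := by
    rw [← hv1, Finset.sum_congr rfl fun i _ => hv i, ← Finset.sum_mul, hsum, mul_one]
  have hS : ∑ j, v j ^ α = ((K.card : ℝ) + L.card * t ^ α) * x ^ α := by
    have : ∀ i, v i ^ α = (if i ∈ K then 1 else if i ∈ L then t ^ α else 0) * x ^ α := by
      intro i
      rw [hv i]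
      split_ifs
      · simp
      · rw [Real.mul_rpow ht.le hi₀.le]
      · rw [zero_mul, zero_mul, Real.zero_rpow (by linarith)]
    rw [Finset.sum_congr rfl fun i _ => this i, ← Finset.sum_mul, hsum, mul_one]
  refine Set.mem_iUnion.2 ⟨K, Set.mem_iUnion.2 ⟨L, t, ?_, ?_⟩⟩
  · rcases hor with ⟨-, rfl⟩ | ⟨j, hj, hjt⟩
    · exact Or.inl rfl
    · right
      refine ⟨?_, ht, ?_⟩
      · exact_mod_cast (Finset.card_pos.2 ⟨j, hj⟩).ne'
      have h1 := heq i₀ hi₀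
      have h2 := heq j (Finset.mem_filter.1 hj).2.2
      rw [← hx, ← h2, hS, hjt, Real.mul_rpow ht.le hi₀.le, Real.mul_rpow ht.le hi₀.le] at h1
      have p1 := Real.rpow_pos_of_pos hi₀ α
      have p2 := Real.rpow_pos_of_pos hi₀ (α - 1)
      refine mul_left_cancel₀ (mul_pos p1 p2).ne' ?_
      linear_combination h1
  · funext i
    have hD : ((K.card : ℝ) + L.card * t) ≠ 0 := left_ne_zero_of_mul_eq_one hnorm
    rw [twoLevel, div_eq_iff hD, hv i, mul_assoc, mul_comm x, hnorm, mul_one]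
end
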